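/- arXiv:math/0502048 — 3 statements merged into one kernel-verified Lean document; each statement's English description precedes it below -/
import Mathlib

section
/- Let (X, U) be a Hausdorff uniform space whose uniformity is generated by a family {d_i : i ∈ I} of pseudometrics, and let T : X → X be an orbitally continuous map such that X is T-orbitally complete. Suppose there exist real numbers b_i, c_i with 0 < b_i + c_i < 1 such that for all i ∈ I and all x, y ∈ X: min{d_i(Tx, Ty), d_i(x, Tx), d_i(y, Ty)} − min{d_i(x, Ty), d_i(y, Tx)} ≤ b_i · d_i(x, Tx) + c_i · d_i(x, y). Then for each x ∈ X, the sequence of iterates {T^n x} converges to a fixed point of T. -/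
open Filter

/-!
Fix one of the pseudometrics and let `sₙ` be the distance from `Tⁿ x` to `Tⁿ⁺¹ x`. At a pair
`(u, v)` with `v` indistinguishable from `T u`, the inequality says
`min (d(v, T v)) (d(u, T u)) ≤ (b + c) d(u, T u)`, so `d(v, T v) ≤ (b + c) d(u, T u)` as soon as
`d(u, T u) ≠ 0`. Consecutive iterates alone do not suffice: a pseudometric can have `sₙ = 0` while
`Tⁿ x` is not fixed, and then the pair `(Tⁿ x, Tⁿ⁺¹ x)` gives no bound on `sₙ₊₁`. Instead compare
`sₙ` with the last nonzero `sⱼ` before it: `Tʲ⁺¹ x` and `Tⁿ x` are then at distance zero, so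
`sₙ ≤ (b + c) sⱼ`. Hence the nonzero `sₙ` decrease geometrically and the orbit is Cauchy for every
pseudometric.
-/

/-- The contraction condition of the theorem at a single pair `(x, y)`. The distance `ρ` is a bare
function, so that the condition can be imposed on each member of a family of pseudometrics. -/
def MinContractionAt {X : Type*} (ρ : X → X → ℝ) (T : X → X) (b c : ℝ) (x y : X) : Prop :=
  min (ρ (T x) (T y)) (min (ρ x (T x)) (ρ y (T y))) - min (ρ x (T y)) (ρ y (T x)) ≤
    b * ρ x (T x) + c * ρ x y

theorem summable_of_norm_le_mul_norm_last_ne_zero {E : Type*} [SeminormedAddCommGroup E]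
    [CompleteSpace E] {f : ℕ → E} {r : ℝ} (hr : r < 1)
    (hf : ∀ j n, j < n → f j ≠ 0 → (∀ k, j < k → k < n → f k = 0) → ‖f n‖ ≤ r * ‖f j‖) :
    Summable f := by
  rcases f.support.finite_or_infinite with hfin | hinf
  · exact summable_of_hasFiniteSupport hfin
  let φ := Nat.nth (f · ≠ 0)
  have ratio_le (k : ℕ) : ‖f (φ (k + 1))‖ ≤ r * ‖f (φ k)‖ := by
    refine hf _ _ (Nat.nth_strictMono hinf k.lt_succ_self) (Nat.nth_mem_of_infinite hinf k) ?_
    intro m hkm hmk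
    by_contra hm
    exact hkm.not_ge (Nat.le_nth_of_lt_nth_succ hmk hm)
  have eq_zero_off_range : ∀ n ∉ Set.range φ, f n = 0 := by
    intro n hn
    by_contra hne
    exact hn (Nat.subset_range_nth hne)
  exact ((Nat.nth_injective hinf).summable_iff eq_zero_off_range).1
    (summable_of_ratio_norm_eventually_le hr (.of_forall ratio_le))

section PseudoMetricSpace

variable {X : Type*} [PseudoMetricSpace X] {T : X → X} {b c : ℝ}

theorem MinContractionAt.dist_map_le {x y : X} (h : MinContractionAt dist T b c x y)
    (hbc : b + c < 1) (hx : dist x (T x) ≠ 0) (hxy : dist (T x) y = 0) :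
    dist y (T y) ≤ (b + c) * dist x (T x) := by
  have dist_x_y : dist x y = dist x (T x) :=
    (PseudoMetricSpace.dist_eq_of_dist_zero x hxy).symm
  have dist_Tx_Ty : dist (T x) (T y) = dist y (T y) := by
    simpa only [dist_comm] using PseudoMetricSpace.dist_eq_of_dist_zero (T y) hxy
  have min_le : min (dist y (T y)) (dist x (T x)) ≤ (b + c) * dist x (T x) := by
    rw [MinContractionAt, dist_x_y, dist_Tx_Ty, dist_comm y (T x), hxy,
      min_eq_right dist_nonneg, sub_zero, min_left_comm, min_self, min_comm] at h
    linarith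
  have lt_step : (b + c) * dist x (T x) < dist x (T x) :=
    mul_lt_of_lt_one_left (dist_nonneg.lt_of_ne' hx) hbc
  exact (min_le_iff.1 min_le).resolve_right lt_step.not_ge

theorem dist_eq_zero_of_dist_succ_eq_zero {u : ℕ → X} {m n : ℕ} (hmn : m ≤ n)
    (hu : ∀ k, m ≤ k → k < n → dist (u k) (u (k + 1)) = 0) : dist (u m) (u n) = 0 := by
  have sum_eq_zero : ∑ k ∈ Finset.Ico m n, dist (u k) (u (k + 1)) = 0 :=
    Finset.sum_eq_zero fun k hk => hu k (Finset.mem_Ico.1 hk).1 (Finset.mem_Ico.1 hk).2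
  exact (sum_eq_zero ▸ dist_le_Ico_sum_dist u hmn).antisymm dist_nonneg

theorem cauchySeq_iterate_of_minContractionAt {x : X} (hbc : b + c < 1)
    (h : ∀ m n, m < n → MinContractionAt dist T b c (T^[m] x) (T^[n] x)) :
    CauchySeq fun n => T^[n] x := by
  refine cauchySeq_of_summable_dist (summable_of_norm_le_mul_norm_last_ne_zero hbc ?_)
  intro j n hjn hj hzero
  simp only [Real.norm_of_nonneg dist_nonneg, Nat.succ_eq_add_one,
    Function.iterate_succ_apply'] at hj ⊢
  refine (h j n hjn).dist_map_le hbc hj ?_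
  rw [← Function.iterate_succ_apply' T]
  exact dist_eq_zero_of_dist_succ_eq_zero (u := fun k => T^[k] x) hjn hzero

end PseudoMetricSpace

theorem isFixedPt_of_tendsto_iterate_of_tendsto_map {X : Type*} [TopologicalSpace X] [T2Space X]
    {T : X → X} {x z : X} (hz : Tendsto (fun n => T^[n] x) atTop (nhds z))
    (hTz : Tendsto (fun n => T (T^[n] x)) atTop (nhds (T z))) : Function.IsFixedPt T z := by
  refine tendsto_nhds_unique hTz ?_
  simp only [← Function.iterate_succ_apply']
  exact hz.comp (tendsto_add_atTop_nat 1)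

theorem stmt_3_general {X I : Type*} [UniformSpace X] [T2Space X]
    (d : I → X → X → ℝ)
    (hd_self : ∀ i x, d i x x = 0)
    (hd_symm : ∀ i x y, d i x y = d i y x)
    (hd_tri : ∀ i x y z, d i x z ≤ d i x y + d i y z)
    (hU : uniformity X = ⨅ (i : I) (ε : ℝ) (_ : 0 < ε),
      Filter.principal {p : X × X | d i p.1 p.2 < ε})
    (T : X → X) (x : X)
    (hcont : ∀ z, Tendsto (fun n => T^[n] x) atTop (nhds z) →
      Tendsto (fun n => T (T^[n] x)) atTop (nhds (T z)))
    (hcomplete : CauchySeq (fun n => T^[n] x) → ∃ z, Tendsto (fun n => T^[n] x) atTop (nhds z))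
    (b c : I → ℝ) (hbc : ∀ i, b i + c i < 1)
    (h : ∀ i m n, m < n → MinContractionAt (d i) T (b i) (c i) (T^[m] x) (T^[n] x)) :
    ∃ z, T z = z ∧ Tendsto (fun n => T^[n] x) atTop (nhds z) := by
  let p (i : I) : PseudoMetricSpace X :=
    { dist := d i, dist_self := hd_self i, dist_comm := hd_symm i, dist_triangle := hd_tri i }
  have uniformSpace_eq : ‹UniformSpace X› = ⨅ i, (p i).toUniformSpace :=
    UniformSpace.ext (by rw [hU, iInf_uniformity]; rfl)
  have cauchySeq_orbit : CauchySeq fun n => T^[n] x := by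
    rw [CauchySeq, uniformSpace_eq, cauchy_iInf_uniformSpace']
    intro i
    let := p i
    exact cauchySeq_iterate_of_minContractionAt (hbc i) (h i)
  obtain ⟨z, hz⟩ := hcomplete cauchySeq_orbit
  exact ⟨z, isFixedPt_of_tendsto_iterate_of_tendsto_map hz (hcont z hz), hz⟩

/-- Let `(X, U)` be a Hausdorff uniform space whose uniformity is generated
by a family `{d_i : i ∈ I}` of pseudometrics, and `T : X → X` an orbitally continuous map
such that `X` is `T`-orbitally complete. If there are reals `b_i, c_i` with
`0 < b_i + c_i < 1` such that for all `i` and all `x, y`: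
`min{d_i(Tx,Ty), d_i(x,Tx), d_i(y,Ty)} − min{d_i(x,Ty), d_i(y,Tx)}`
`≤ b_i·d_i(x,Tx) + c_i·d_i(x,y)`, then for each `x` the sequence of iterates `{T^n x}`
converges to a fixed point of `T`. -/
theorem stmt_3 {X I : Type*} [UniformSpace X] [T2Space X]
    (d : I → X → X → ℝ)
    (hd_self : ∀ i x, d i x x = 0)
    (hd_nonneg : ∀ i x y, 0 ≤ d i x y)
    (hd_symm : ∀ i x y, d i x y = d i y x)
    (hd_tri : ∀ i x y z, d i x z ≤ d i x y + d i y z)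
    -- the uniformity of `X` is generated by the pseudometrics `d i`:
    (hU : uniformity X = ⨅ (i : I) (ε : ℝ) (_ : 0 < ε),
      Filter.principal {p : X × X | d i p.1 p.2 < ε})
    (T : X → X)
    -- `T` is orbitally continuous:
    (hTcont : ∀ (x u : X) (n : ℕ → ℕ), StrictMono n →
      Tendsto (fun j => T^[n j] x) atTop (nhds u) →
      Tendsto (fun j => T (T^[n j] x)) atTop (nhds (T u)))
    -- `X` is `T`-orbitally complete:
    (horb : ∀ x : X, ∀ l : Filter X, Cauchy l →
      l ≤ Filter.map (fun n : ℕ => T^[n] x) Filter.atTop → ∃ z, l ≤ nhds z)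
    (b c : I → ℝ)
    (hbc0 : ∀ i, 0 < b i + c i) (hbc1 : ∀ i, b i + c i < 1)
    (h : ∀ (i : I) (x y : X),
      min (d i (T x) (T y)) (min (d i x (T x)) (d i y (T y)))
      - min (d i x (T y)) (d i y (T x))
      ≤ b i * d i x (T x) + c i * d i x y) :
    ∀ x : X, ∃ z : X, T z = z ∧ Tendsto (fun n : ℕ => T^[n] x) atTop (nhds z) := by
  intro x
  exact stmt_3_general d hd_self hd_symm hd_tri hU T x (hTcont x · id strictMono_id)
    (horb x _ · le_rfl) b c hbc1 fun i _ _ _ => h i _ _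
end

section
/- Let (X, d) be a complete metric space and let T : X → X be a continuous map. Suppose there exist real numbers b, c with 0 < b + c < 1 such that for all x, y ∈ X: min{d(Tx, Ty), d(x, Tx), d(y, Ty)} − min{d(x, Ty), d(y, Tx)} ≤ b · d(x, Tx) + c · d(x, y). Then for each x ∈ X, the sequence of iterates {T^n x} converges to a fixed point of T. -/
open Filter

/-!
For `y = T x` the term `dist y (T x)` vanishes, and the hypothesis reads
`min (dist (T x) (T (T x))) (dist x (T x)) ≤ (b + c) * dist x (T x)`. Since `b + c < 1`, the
minimum cannot be `dist x (T x)` unless `x` is already fixed. So the distances between consecutive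
iterates satisfy the ratio test, the iterates form a Cauchy sequence, and by continuity of `T` their
limit is a fixed point.
-/

theorem cauchySeq_of_dist_succ_le_mul {X : Type*} [PseudoMetricSpace X] {u : ℕ → X} {k : ℝ}
    (hk : k < 1) (hu : ∀ n, dist (u (n + 1)) (u (n + 2)) ≤ k * dist (u n) (u (n + 1))) :
    CauchySeq u :=
  cauchySeq_of_summable_dist <| summable_of_ratio_norm_eventually_le hk <| .of_forall fun n ↦ by
    simpa only [Real.norm_of_nonneg dist_nonneg] using hu n

theorem dist_map_map_le_of_min_le {X : Type*} [MetricSpace X] {T : X → X} {k : ℝ} (hk : k < 1)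
    {x : X} (h : min (dist (T x) (T (T x))) (dist x (T x)) ≤ k * dist x (T x)) :
    dist (T x) (T (T x)) ≤ k * dist x (T x) := by
  by_cases hx : T x = x
  · simp [hx]
  · have hlt : k * dist x (T x) < dist x (T x) :=
      mul_lt_of_lt_one_left (dist_pos.2 (Ne.symm hx)) hk
    exact (min_le_iff.1 h).resolve_right hlt.not_ge

theorem stmt_7_general {X : Type*} [MetricSpace X] [CompleteSpace X] {T : X → X}
    (hT : Continuous T) {k : ℝ} (hk : k < 1)
    (h : ∀ x, min (dist (T x) (T (T x))) (dist x (T x)) ≤ k * dist x (T x)) (x : X) :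
    ∃ z, T z = z ∧ Tendsto (fun n : ℕ ↦ T^[n] x) atTop (nhds z) := by
  have hcauchy : CauchySeq fun n : ℕ ↦ T^[n] x := cauchySeq_of_dist_succ_le_mul hk fun n ↦ by
    simpa only [Function.iterate_succ_apply'] using dist_map_map_le_of_min_le hk (h (T^[n] x))
  obtain ⟨z, hz⟩ := cauchySeq_tendsto_of_complete hcauchy
  exact ⟨z, isFixedPt_of_tendsto_iterate hz hT.continuousAt, hz⟩

/-- Let `(X, d)` be a complete metric space and `T : X → X` continuous,
satisfying `min{d(Tx,Ty), d(x,Tx), d(y,Ty)} − min{d(x,Ty), d(y,Tx)} ≤ b·d(x,Tx) + c·d(x,y)`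
with `0 < b + c < 1`. Then for each `x`, the sequence of iterates `T^[n] x` converges to a
fixed point of `T`. -/
theorem stmt_7 {X : Type*} [MetricSpace X] [CompleteSpace X]
    (T : X → X) (hT : Continuous T)
    (b c : ℝ) (hbc0 : 0 < b + c) (hbc1 : b + c < 1)
    (h : ∀ x y : X,
      min (dist (T x) (T y)) (min (dist x (T x)) (dist y (T y)))
      - min (dist x (T y)) (dist y (T x))
      ≤ b * dist x (T x) + c * dist x y) :
    ∀ x : X, ∃ z : X, T z = z ∧ Tendsto (fun n : ℕ => T^[n] x) atTop (nhds z) :=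
  stmt_7_general hT hbc1 fun x ↦ by
    simpa [add_mul, min_comm (dist x (T x))] using h x (T x)
end

section
/- Let (X, d) be a metric space, let F : X → 2^X be a multifunction with Fx nonempty and compact for each x ∈ X, let r ≥ 1 be an integer and a, b, c real numbers with 0 < b + c < 1, and suppose that for all x, y ∈ X: min{H(Fx, Fy)^r, d(x, Fx)·d(y, Fy)^{r-1}, d(y, Fy)^r} + a · min{d(x, Fy), d(y, Fx)} ≤ [b · d(x, Fx) + c · d(x, y)] · d(y, Fy)^{r-1}. Let {x_n} be a sequence with x_{n+1} ∈ F x_n and d(x_n, x_{n+1}) = d(x_n, F x_n) for all n, and assume d(x_n, F x_n) > 0 for all n. Then d(x_n, x_{n+1}) ≤ (b + c) · d(x_{n-1}, x_n) for all n ≥ 1, and consequently d(x_n, x_{n+1}) ≤ (b + c)^n · d(x_0, x_1) for all n ≥ 0. -/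
open Metric

/-!
Let `y ∈ F x` be a nearest point to `x`, and put `p = d(x, F x) = d(x, y)`, `q = d(y, F y)`.
Since `y ∈ F x`, the coefficient of `a` vanishes, and `q ≤ H(F x, F y)` removes the Hausdorff term
from the minimum. If `q > 0`, dividing by `q ^ (r - 1)` leaves `min p q ≤ (b + c) p`. If also
`p > 0`, the alternative `p ≤ (b + c) p` contradicts `b + c < 1`, so `q ≤ (b + c) p`.
If instead `p = 0`, then `y = x` and `q = p = 0`.
-/

theorem le_mul_of_min_le_mul {R : Type*} [Semiring R] [LinearOrder R] [IsStrictOrderedRing R]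
    {p q k : R} (hp : 0 < p) (hk : k < 1) (h : min p q ≤ k * p) : q ≤ k * p :=
  (min_le_iff.mp h).resolve_left (mul_lt_of_lt_one_left hp hk).not_ge

theorem min_mul_rpow_sub_one_rpow (p : ℝ) {q : ℝ} (hq : 0 < q) (r : ℝ) :
    min (p * q ^ (r - 1)) (q ^ r) = min p q * q ^ (r - 1) := by
  have hqr : q ^ r = q * q ^ (r - 1) := by
    rw [mul_comm, ← Real.rpow_add_one hq.ne', sub_add_cancel]
  rw [hqr, min_mul_of_nonneg p q (Real.rpow_nonneg hq.le _)]

theorem min_infDist_infDist_eq_zero_of_mem {X : Type*} [PseudoMetricSpace X] {s : Set X} {y : X}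
    (hy : y ∈ s) (x : X) (t : Set X) : min (infDist x t) (infDist y s) = 0 := by
  rw [infDist_zero_of_mem hy, min_eq_right infDist_nonneg]

theorem infDist_le_mul_infDist_of_infDist_pos {X : Type*} [PseudoMetricSpace X] {s t : Set X}
    {x y : X} {r a b c : ℝ} (hr : 0 ≤ r) (hbc : b + c < 1) (hst : hausdorffEDist s t ≠ ⊤)
    (hys : y ∈ s) (hxy : dist x y = infDist x s) (hp : 0 < infDist x s) (hq : 0 < infDist y t)
    (h : min (hausdorffDist s t ^ r) (min (infDist x s * infDist y t ^ (r - 1)) (infDist y t ^ r))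
        + a * min (infDist x t) (infDist y s)
      ≤ (b * infDist x s + c * dist x y) * infDist y t ^ (r - 1)) :
    infDist y t ≤ (b + c) * infDist x s := by
  have hqH : infDist y t ^ r ≤ hausdorffDist s t ^ r :=
    Real.rpow_le_rpow infDist_nonneg (infDist_le_hausdorffDist_of_mem hys hst) hr
  rw [min_infDist_infDist_eq_zero_of_mem hys, mul_zero, add_zero,
    min_eq_right ((min_le_right _ _).trans hqH), min_mul_rpow_sub_one_rpow _ hq, hxy,
    ← add_mul] at h
  exact le_mul_of_min_le_mul hp hbc (le_of_mul_le_mul_right h (Real.rpow_pos_of_pos hq _))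

theorem infDist_self_image_eq_zero_of_dist_eq_infDist {X : Type*} [MetricSpace X] {F : X → Set X}
    {x y : X} (hxy : dist x y = infDist x (F x)) (hx : infDist x (F x) = 0) :
    infDist y (F y) = 0 := by
  obtain rfl : x = y := dist_eq_zero.mp (hxy.trans hx)
  exact hx

theorem infDist_self_image_le_mul {X : Type*} [MetricSpace X] {F : X → Set X} {x y : X}
    {r a b c : ℝ} (hr : 0 ≤ r) (hbc0 : 0 ≤ b + c) (hbc1 : b + c < 1)
    (hF : hausdorffEDist (F x) (F y) ≠ ⊤) (hy : y ∈ F x) (hxy : dist x y = infDist x (F x))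
    (h : min (hausdorffDist (F x) (F y) ^ r)
        (min (infDist x (F x) * infDist y (F y) ^ (r - 1)) (infDist y (F y) ^ r))
        + a * min (infDist x (F y)) (infDist y (F x))
      ≤ (b * infDist x (F x) + c * dist x y) * infDist y (F y) ^ (r - 1)) :
    infDist y (F y) ≤ (b + c) * infDist x (F x) := by
  obtain hq | hq := (infDist_nonneg (x := y) (s := F y)).eq_or_lt
  · rw [← hq]
    exact mul_nonneg hbc0 infDist_nonneg
  · have hp : 0 < infDist x (F x) := infDist_nonneg.lt_of_ne fun hp ↦
      hq.ne' (infDist_self_image_eq_zero_of_dist_eq_infDist hxy hp.symm)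
    exact infDist_le_mul_infDist_of_infDist_pos hr hbc1 hF hy hxy hp hq h

theorem stmt_9_general {X : Type*} [MetricSpace X] {F : X → Set X}
    (hF : ∀ x y, hausdorffEDist (F x) (F y) ≠ ⊤)
    {r a b c : ℝ} (hr : 0 ≤ r) (hbc0 : 0 ≤ b + c) (hbc1 : b + c < 1)
    (h : ∀ x y : X,
      min (hausdorffDist (F x) (F y) ^ r)
        (min (infDist x (F x) * infDist y (F y) ^ (r - 1)) (infDist y (F y) ^ r))
      + a * min (infDist x (F y)) (infDist y (F x))
      ≤ (b * infDist x (F x) + c * dist x y) * infDist y (F y) ^ (r - 1))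
    {x : ℕ → X} (hx : ∀ n, x (n + 1) ∈ F (x n))
    (hdx : ∀ n, dist (x n) (x (n + 1)) = infDist (x n) (F (x n))) :
    (∀ n : ℕ, dist (x (n + 1)) (x (n + 2)) ≤ (b + c) * dist (x n) (x (n + 1))) ∧
    (∀ n : ℕ, dist (x n) (x (n + 1)) ≤ (b + c) ^ n * dist (x 0) (x 1)) := by
  have hstep (n : ℕ) : dist (x (n + 1)) (x (n + 2)) ≤ (b + c) * dist (x n) (x (n + 1)) := by
    rw [hdx n, hdx (n + 1)]
    exact infDist_self_image_le_mul hr hbc0 hbc1 (hF _ _) (hx n) (hdx n) (h _ _)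
  exact ⟨hstep, fun n ↦ le_geom (u := fun n ↦ dist (x n) (x (n + 1))) hbc0 n fun k _ ↦ hstep k⟩

/-- In a metric space, if `F` is a multifunction with nonempty compact
values satisfying the contractive inequality with exponent `r ≥ 1` and `0 < b + c < 1`,
and `{x_n}` is an orbit with `x_{n+1} ∈ F x_n`, `d(x_n, x_{n+1}) = d(x_n, F x_n) > 0`,
then `d(x_n, x_{n+1}) ≤ (b+c)·d(x_{n-1}, x_n)` for `n ≥ 1`, and consequently
`d(x_n, x_{n+1}) ≤ (b+c)^n · d(x_0, x_1)` for all `n`. -/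
theorem stmt_9 {X : Type*} [MetricSpace X]
    (F : X → Set X) (hne : ∀ x, (F x).Nonempty) (hcomp : ∀ x, IsCompact (F x))
    (r : ℕ) (hr : 1 ≤ r) (a b c : ℝ) (hbc0 : 0 < b + c) (hbc1 : b + c < 1)
    (h : ∀ x y : X,
      min (hausdorffDist (F x) (F y) ^ r)
        (min (infDist x (F x) * infDist y (F y) ^ (r - 1)) (infDist y (F y) ^ r))
      + a * min (infDist x (F y)) (infDist y (F x))
      ≤ (b * infDist x (F x) + c * dist x y) * infDist y (F y) ^ (r - 1))
    (x : ℕ → X) (hx : ∀ n, x (n + 1) ∈ F (x n))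
    (hdx : ∀ n, dist (x n) (x (n + 1)) = infDist (x n) (F (x n)))
    (hpos : ∀ n, 0 < infDist (x n) (F (x n))) :
    (∀ n : ℕ, dist (x (n + 1)) (x (n + 2)) ≤ (b + c) * dist (x n) (x (n + 1))) ∧
    (∀ n : ℕ, dist (x n) (x (n + 1)) ≤ (b + c) ^ n * dist (x 0) (x 1)) := by
  have hF (x y : X) : hausdorffEDist (F x) (F y) ≠ ⊤ := hausdorffEDist_ne_top_of_nonempty_of_bounded
    (hne x) (hne y) (hcomp x).isBounded (hcomp y).isBounded
  exact stmt_9_general hF r.cast_nonneg hbc0.le hbc1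
    (by simpa only [← Nat.cast_pred hr, Real.rpow_natCast] using h) hx hdx
end
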